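/- arXiv:1410.5159 — 4 statements merged into one kernel-verified Lean document; each statement's English description precedes it below -/
import Mathlib

section
/- Let A be a Banach algebra over ℂ and let I be a closed two-sided ideal of A. Suppose I has a bounded Δ-weak approximate identity, i.e. there exist a directed set ι, a net (e_α)_{α∈ι} of elements of I, and a constant C > 0 with ‖e_α‖ ≤ C for all α, such that for every a ∈ I and every character φ ∈ Δ(A) one has φ(a e_α) → φ(a). Suppose moreover that the quotient Banach algebra A/I (with the quotient norm) has a bounded left approximate identity, i.e. a bounded net (g_δ) in A/I with ‖g_δ b − b‖ → 0 for every b ∈ A/I. Then A has a bounded Δ-weak approximate identity: there is a bounded net (u_β) in A such that φ(u_β) → 1 for every φ ∈ Δ(A). -/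
open Filter Metric

universe u v

/-- Let `A` be a Banach algebra over `ℂ` and `I` a closed two-sided
ideal of `A`.  Suppose `I` has a bounded Δ-weak approximate identity: a net
`(e_α)` of elements of `I` with `‖e_α‖ ≤ C` such that `φ (a * e_α) → φ a` for
every `a ∈ I` and every character `φ` of `A` (characters being the nonzero
continuous multiplicative linear functionals `A → ℂ`).  Suppose moreover that the
quotient Banach algebra `A/I`, with the quotient norm, has a bounded left
approximate identity `(g_δ)`.  Here elements of `A/I` are encoded by
representatives in `A`, and the quotient norm of the coset `x + I` is
`Metric.infDist x I = inf { ‖x + y‖ : y ∈ I }`; thus the bounded left approximate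
identity is a net `(g_δ)` in `A` whose cosets are bounded in the quotient norm
(`infDist (g_δ) I ≤ D`) and satisfy `‖(g_δ + I)(b + I) - (b + I)‖_{A/I} =
infDist (g_δ * b - b) I → 0` for every coset `b + I`, `b ∈ A`.
Then `A` has a bounded Δ-weak approximate identity: a bounded net `(u_β)`
(indexed by some directed set `χ`) with `φ (u_β) → 1` for every character `φ`. -/
theorem hasBoundedDeltaWeakApproxIdentity_of_ideal
    {A : Type u} [NonUnitalNormedRing A] [NormedSpace ℂ A]
    [IsScalarTower ℂ A A] [SMulCommClass ℂ A A] [CompleteSpace A]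
    (I : TwoSidedIdeal A) (hI : IsClosed (I : Set A))
    -- the bounded Δ-weak approximate identity of `I`
    {ι : Type u} [Preorder ι] [IsDirected ι (· ≤ ·)] [Nonempty ι]
    (e : ι → A) (he_mem : ∀ α, e α ∈ I)
    (C : ℝ) (hC : 0 < C) (he_bdd : ∀ α, ‖e α‖ ≤ C)
    (he_wai : ∀ a ∈ I, ∀ φ : A →L[ℂ] ℂ, φ ≠ 0 →
      (∀ x y : A, φ (x * y) = φ x * φ y) →
        Tendsto (fun α => φ (a * e α)) atTop (nhds (φ a)))
    -- the bounded left approximate identity of the quotient `A/I`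
    {κ : Type v} [Preorder κ] [IsDirected κ (· ≤ ·)] [Nonempty κ]
    (g : κ → A) (D : ℝ) (hD : 0 < D)
    (hg_bdd : ∀ δ, infDist (g δ) (I : Set A) ≤ D)
    (hg_lai : ∀ b : A,
      Tendsto (fun δ => infDist (g δ * b - b) (I : Set A)) atTop (nhds 0)) :
    -- conclusion: `A` has a bounded Δ-weak approximate identity
    ∃ (χ : Type (max u v)) (p : Preorder χ), IsDirected χ p.le ∧ Nonempty χ ∧
      ∃ (u : χ → A) (K : ℝ), 0 < K ∧ (∀ β, ‖u β‖ ≤ K) ∧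
        ∀ φ : A →L[ℂ] ℂ, φ ≠ 0 → (∀ x y : A, φ (x * y) = φ x * φ y) →
          Tendsto (fun β => φ (u β)) (@atTop χ p) (nhds 1) := by
  have hne : (I : Set A).Nonempty := ⟨0, I.zero_mem⟩
  have hy : ∀ δ, ∃ y ∈ (I : Set A), dist (g δ) y < D + 1 := fun δ =>
    (infDist_lt_iff hne).1 (lt_of_le_of_lt (hg_bdd δ) (by linarith))
  choose y hyI hyd using hy
  have hf : ∀ δ, ‖g δ - y δ‖ ≤ D + 1 := fun δ => by
    rw [← dist_eq_norm]; exact (hyd δ).le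
  refine ⟨ι × κ, inferInstance, ?_, inferInstance,
    fun q => e q.1 + (g q.2 - y q.2) - (g q.2 - y q.2) * e q.1,
    C + (D + 1) + (D + 1) * C, by positivity, ?_, ?_⟩
  · constructor
    rintro ⟨a, b⟩ ⟨c, d⟩
    obtain ⟨m, h1, h2⟩ := exists_ge_ge a c
    obtain ⟨n, h3, h4⟩ := exists_ge_ge b d
    exact ⟨(m, n), ⟨h1, h3⟩, ⟨h2, h4⟩⟩
  · rintro ⟨α, δ⟩
    have h1 := norm_sub_le (e α + (g δ - y δ)) ((g δ - y δ) * e α)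
    have h2 := norm_add_le (e α) (g δ - y δ)
    have h3 := norm_mul_le (g δ - y δ) (e α)
    have h4 : ‖g δ - y δ‖ * ‖e α‖ ≤ (D + 1) * C :=
      mul_le_mul (hf δ) (he_bdd α) (norm_nonneg _) (by linarith)
    have h5 := hf δ
    have h6 := he_bdd α
    show ‖e α + (g δ - y δ) - (g δ - y δ) * e α‖ ≤ _
    linarith
  · intro φ hφ hmul
    have key : Tendsto (fun q : ι × κ => (1 - φ (e q.1)) * (1 - φ (g q.2 - y q.2)))
        atTop (nhds 0) := by
      by_cases hz : ∀ a ∈ I, φ a = 0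
      · obtain ⟨b, hb⟩ : ∃ b, φ b ≠ 0 := by
          by_contra! h
          exact hφ (ContinuousLinearMap.ext h)
        have hle : ∀ x, ‖φ x‖ ≤ ‖φ‖ * infDist x (I : Set A) := by
          intro x
          have hpos : 0 < ‖φ‖ := norm_pos_iff.2 hφ
          have : ‖φ x‖ / ‖φ‖ ≤ infDist x (I : Set A) := by
            refine (le_infDist hne).2 fun z hzI => ?_
            rw [div_le_iff₀ hpos, dist_eq_norm, mul_comm]
            have := φ.le_opNorm (x - z)
            rwa [map_sub, hz z hzI, sub_zero] at this
          rwa [div_le_iff₀ hpos, mul_comm] at this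
        have h1 : Tendsto (fun δ => φ (g δ * b - b)) atTop (nhds 0) := by
          refine squeeze_zero_norm (fun δ => hle _) ?_
          simpa using (hg_lai b).const_mul ‖φ‖
        have h2 : Tendsto (fun δ => 1 - φ (g δ - y δ)) atTop (nhds 0) := by
          have h3 := h1.mul_const (-(φ b)⁻¹)
          rw [zero_mul] at h3
          refine h3.congr fun δ => ?_
          rw [map_sub, map_sub, hmul, hz _ (hyI δ)]
          field_simp
          ring
        have h4 : Tendsto (fun q : ι × κ => 1 - φ (g q.2 - y q.2)) atTop (nhds 0) := by
          rw [← prod_atTop_atTop_eq]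
          exact h2.comp tendsto_snd
        refine h4.congr fun q => ?_
        rw [hz _ (he_mem q.1)]
        ring
      · push Not at hz
        obtain ⟨a, haI, ha⟩ := hz
        have h1 : Tendsto (fun α => 1 - φ (e α)) atTop (nhds 0) := by
          have h3 := ((he_wai a haI φ hφ hmul).const_mul (φ a)⁻¹).const_sub 1
          rw [inv_mul_cancel₀ ha, sub_self] at h3
          refine h3.congr fun α => ?_
          rw [hmul, inv_mul_cancel_left₀ ha]
        have h4 : Tendsto (fun q : ι × κ => 1 - φ (e q.1)) atTop (nhds 0) := by
          rw [← prod_atTop_atTop_eq]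
          exact h1.comp tendsto_fst
        have h5 := h4.norm.mul_const (1 + ‖φ‖ * (D + 1))
        rw [norm_zero, zero_mul] at h5
        refine squeeze_zero_norm (fun q => ?_) h5
        rw [norm_mul]
        refine mul_le_mul_of_nonneg_left ?_ (norm_nonneg _)
        have h6 := norm_sub_le (1 : ℂ) (φ (g q.2 - y q.2))
        have h7 := φ.le_opNorm (g q.2 - y q.2)
        have h8 := mul_le_mul_of_nonneg_left (hf q.2) (norm_nonneg φ)
        rw [norm_one] at h6
        linarith
    have h9 := key.const_sub 1
    rw [sub_zero] at h9
    refine h9.congr fun q => ?_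
    rw [map_sub φ (e q.1 + _), map_add, hmul]
    ring
end

section
/- Let E be a normed vector space over ℂ, let ι be a directed set, let (e_i)_{i∈ι} be a net in E with ‖e_i‖ ≤ M for all i (for some M > 0), and let S be a set of continuous linear functionals on E such that f(e_i) → 1 for every f ∈ S. Then there exists an element Φ of the bidual E** (the continuous dual of the strong dual of E) with ‖Φ‖ ≤ M and Φ(f) = 1 for every f ∈ S. -/
open Filter

/-- If `(e_i)` is a net in a normed `ℂ`-vector space `E` with
`‖e_i‖ ≤ M` and `S` is a set of continuous linear functionals on `E` with
`f (e_i) → 1` for every `f ∈ S`, then there is an element `Φ` of the bidual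
`E**` with `‖Φ‖ ≤ M` and `Φ f = 1` for all `f ∈ S`. -/
theorem exists_bidual_cluster_point
    {E : Type*} [NormedAddCommGroup E] [NormedSpace ℂ E]
    {ι : Type*} [Preorder ι] [IsDirected ι (· ≤ ·)] [Nonempty ι]
    (e : ι → E) (M : ℝ) (hM : 0 < M) (he_bdd : ∀ i, ‖e i‖ ≤ M)
    (S : Set (StrongDual ℂ E))
    (hS : ∀ f ∈ S, Tendsto (fun i => f (e i)) atTop (nhds 1)) :
    ∃ Φ : StrongDual ℂ (StrongDual ℂ E),
      ‖Φ‖ ≤ M ∧ ∀ f ∈ S, Φ f = 1 := by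
  let g : ι → WeakDual ℂ (StrongDual ℂ E) := fun i =>
    StrongDual.toWeakDual (NormedSpace.inclusionInDoubleDual ℂ E (e i))
  let U : Ultrafilter ι := Ultrafilter.of atTop
  have hU : (U : Filter ι) ≤ atTop := Ultrafilter.of_le _
  have hK := WeakDual.isCompact_closedBall (𝕜 := ℂ) (0 : StrongDual ℂ (StrongDual ℂ E)) M
  have hg : ∀ i, g i ∈ WeakDual.toStrongDual ⁻¹'
      Metric.closedBall (0 : StrongDual ℂ (StrongDual ℂ E)) M := by
    intro i
    refine (mem_closedBall_zero_iff (E := StrongDual ℂ (StrongDual ℂ E))).2 ?_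
    exact (NormedSpace.double_dual_bound ℂ E (e i)).trans (he_bdd i)
  obtain ⟨Φ, hΦ, hlim⟩ := hK.ultrafilter_le_nhds' (U.map g)
    (Ultrafilter.mem_map.2 (Filter.univ_mem' hg))
  refine ⟨WeakDual.toStrongDual Φ, ?_, ?_⟩
  · exact mem_closedBall_zero_iff.1 hΦ
  · intro f hf
    have h1 : Tendsto g U (nhds Φ) := hlim
    have h2 : Tendsto (fun i => g i f) U (nhds (Φ f)) :=
      ((WeakDual.eval_continuous f).tendsto Φ).comp h1
    exact tendsto_nhds_unique h2 ((hS f hf).mono_left hU)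
end

section
/- Let A be a Banach algebra over ℂ and let φ₀ ∈ Δ(A) be a character of A. Suppose the closed ideal ker φ₀ has a bounded Δ-weak approximate identity, i.e. a bounded net (e_α) of elements of ker φ₀ such that ψ(a e_α) → ψ(a) for every a ∈ ker φ₀ and every ψ ∈ Δ(A). Then A has a bounded Δ-weak approximate identity: there is a bounded net (u_β) in A such that ψ(u_β) → 1 for every ψ ∈ Δ(A). -/
open Filter

universe u

/-- Let `A` be a Banach algebra over `ℂ` and `φ₀` a character of `A`.
If the closed ideal `ker φ₀` has a bounded Δ-weak approximate identity — a bounded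
net `(e_α)` of elements of `ker φ₀` with `ψ (a * e_α) → ψ a` for every `a ∈ ker φ₀`
and every character `ψ` of `A` — then `A` has a bounded Δ-weak approximate identity:
a bounded net `(u_β)` (indexed by some directed set `κ`) with `ψ (u_β) → 1` for
every character `ψ` of `A`. Characters are nonzero continuous multiplicative
linear functionals. -/
theorem hasBoundedDeltaWeakApproxIdentity_of_ker_char
    {A : Type u} [NonUnitalNormedRing A] [NormedSpace ℂ A]
    [IsScalarTower ℂ A A] [SMulCommClass ℂ A A] [CompleteSpace A]
    {ι : Type u} [Preorder ι] [IsDirected ι (· ≤ ·)] [Nonempty ι]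
    (φ₀ : A →L[ℂ] ℂ) (hφ₀ : φ₀ ≠ 0) (hφ₀mul : ∀ x y : A, φ₀ (x * y) = φ₀ x * φ₀ y)
    (e : ι → A) (he_mem : ∀ α, φ₀ (e α) = 0)
    (C : ℝ) (hC : 0 < C) (he_bdd : ∀ α, ‖e α‖ ≤ C)
    (he_wai : ∀ a : A, φ₀ a = 0 →
      ∀ ψ : A →L[ℂ] ℂ, ψ ≠ 0 → (∀ x y : A, ψ (x * y) = ψ x * ψ y) →
        Tendsto (fun α => ψ (a * e α)) atTop (nhds (ψ a))) :
    ∃ (κ : Type u) (p : Preorder κ), IsDirected κ p.le ∧ Nonempty κ ∧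
      ∃ (u : κ → A) (D : ℝ), 0 < D ∧ (∀ β, ‖u β‖ ≤ D) ∧
        ∀ ψ : A →L[ℂ] ℂ, ψ ≠ 0 → (∀ x y : A, ψ (x * y) = ψ x * ψ y) →
          Tendsto (fun β => ψ (u β)) (@atTop κ p) (nhds 1) := by
  obtain ⟨b₀, hb₀⟩ : ∃ b, φ₀ b ≠ 0 := by
    by_contra! h
    exact hφ₀ (ContinuousLinearMap.ext h)
  obtain ⟨b, hb⟩ : ∃ b, φ₀ b = 1 := ⟨(φ₀ b₀)⁻¹ • b₀, by simp [hb₀]⟩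
  refine ⟨ι, inferInstance, inferInstance, inferInstance,
    fun α => b + e α - b * e α, ‖b‖ + C + ‖b‖ * C, by positivity, ?_, ?_⟩
  · intro α
    have h1 := norm_sub_le (b + e α) (b * e α)
    have h2 := norm_add_le b (e α)
    have h3 := norm_mul_le b (e α)
    have h4 := mul_le_mul_of_nonneg_left (he_bdd α) (norm_nonneg b)
    have h5 := he_bdd α
    linarith
  · intro ψ hψ hmul
    by_cases h : ∃ a, φ₀ a = 0 ∧ ψ a ≠ 0
    · obtain ⟨a, ha, hψa⟩ := h
      have h1 := he_wai a ha ψ hψ hmul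
      have h2 : Tendsto (fun α => ψ (e α)) atTop (nhds 1) := by
        have h3 := h1.const_mul (ψ a)⁻¹
        simpa [hmul, hψa] using h3
      have h4 := (h2.const_add (ψ b)).sub (h2.const_mul (ψ b))
      simpa [hmul] using h4
    · push Not at h
      have key : ∀ x, ψ x = φ₀ x * ψ b := by
        intro x
        have := h (x - φ₀ x • b) (by simp [hb])
        simpa [sub_eq_zero] using this
      have hne : ψ b ≠ 0 := by
        intro h0
        exact hψ (ContinuousLinearMap.ext fun x => by simp [key x, h0])
      have h1 : ψ b = 1 := by
        have h2 := hmul b b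
        rw [key (b * b), hφ₀mul, hb] at h2
        apply mul_left_cancel₀ hne
        rw [← h2]; ring
      have h3 : ∀ α, ψ (b + e α - b * e α) = 1 := by
        intro α
        simp [hmul, h1]
      simp only [h3]
      exact tendsto_const_nhds
end

section
/- Let X be a locally compact Hausdorff topological space, let t ∈ X, let M ≥ 1 be a real number, and let w : X → ℝ be a function with 1 ≤ w(x) ≤ M for all x ∈ X. Then there exist a directed set ι and a net (f_α)_{α∈ι} of continuous compactly supported functions f_α : X → ℝ with 0 ≤ f_α(x) ≤ 1 for all x ∈ X and f_α(t) = 1 for all α, such that for every continuous g : X → ℂ for which the function x ↦ ‖g(x)‖ · w(x) vanishes at infinity (i.e. for every ε > 0 there is a compact set K ⊆ X with ‖g(x)‖ · w(x) < ε for all x ∉ K), the net of real numbers (⨆ x ∈ X, ‖g(x) − g(t)‖ · f_α(x) · w(x))_α tends to 0. -/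
open Filter

universe u

/-- Let `X` be a locally compact Hausdorff space, `t ∈ X`, `M ≥ 1`,
and `w : X → ℝ` a weight with `1 ≤ w x ≤ M` for all `x`.  Then there is a net
`(f_α)` (indexed by some directed set `ι`) of continuous compactly supported
functions `f_α : X → ℝ` with `0 ≤ f_α ≤ 1` and `f_α t = 1`, such that for every
continuous `g : X → ℂ` for which `x ↦ ‖g x‖ · w x` vanishes at infinity, the net
`(⨆ x, ‖g x − g t‖ · f_α x · w x)_α` tends to `0`.  (This says the `f_α` form a
Δ-weak approximate identity at the evaluation character at `t` for the weighted
algebra `C₀^w(X)` with the weighted sup norm.) -/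
theorem exists_net_deltaWeak_at_eval
    {X : Type u} [TopologicalSpace X] [LocallyCompactSpace X] [T2Space X]
    (t : X) (M : ℝ) (hM : 1 ≤ M) (w : X → ℝ)
    (hw : ∀ x, 1 ≤ w x ∧ w x ≤ M) :
    ∃ (ι : Type u) (p : Preorder ι), IsDirected ι p.le ∧ Nonempty ι ∧
      ∃ f : ι → X → ℝ,
        (∀ α, Continuous (f α) ∧ HasCompactSupport (f α) ∧
          (∀ x, 0 ≤ f α x ∧ f α x ≤ 1) ∧ f α t = 1) ∧
        ∀ g : X → ℂ, Continuous g →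
          (∀ ε > (0 : ℝ), ∃ K : Set X, IsCompact K ∧ ∀ x ∉ K, ‖g x‖ * w x < ε) →
          Tendsto (fun α => ⨆ x, ‖g x - g t‖ * f α x * w x)
            (@atTop ι p) (nhds 0) := by
  have key : ∀ U : {U : Set X // IsOpen U ∧ t ∈ U}, ∃ f : X → ℝ,
      (Continuous f ∧ HasCompactSupport f ∧ (∀ x, 0 ≤ f x ∧ f x ≤ 1) ∧ f t = 1) ∧
      ∀ x ∉ U.1, f x = 0 := by
    rintro ⟨U, hU, ht⟩
    obtain ⟨f, h1, h0, hc, hI⟩ := exists_continuous_one_zero_of_isCompact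
      (isCompact_singleton (x := t)) hU.isClosed_compl
      (by simpa using ht)
    exact ⟨f, ⟨f.continuous, hc, fun x => ⟨(hI x).1, (hI x).2⟩, h1 rfl⟩, fun x hx => h0 hx⟩
  choose f hf hf0 using key
  let p : Preorder {U : Set X // IsOpen U ∧ t ∈ U} :=
    { le := fun U V => V.1 ⊆ U.1
      lt := fun U V => V.1 ⊆ U.1 ∧ ¬ U.1 ⊆ V.1
      lt_iff_le_not_ge := fun _ _ => Iff.rfl
      le_refl := fun U => subset_rfl
      le_trans := fun U V W h1 h2 => h2.trans h1 }
  have hdir : IsDirected {U : Set X // IsOpen U ∧ t ∈ U} p.le :=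
    ⟨fun U V => ⟨⟨U.1 ∩ V.1, U.2.1.inter V.2.1, U.2.2, V.2.2⟩,
      Set.inter_subset_left, Set.inter_subset_right⟩⟩
  refine ⟨_, p, hdir, ⟨⟨Set.univ, isOpen_univ, trivial⟩⟩, f, hf, ?_⟩
  intro g hg _
  rw [Metric.tendsto_nhds]
  intro ε hε
  have hM0 : 0 < M := by linarith
  have hδ : 0 < ε / 2 / M := by positivity
  let U : {U : Set X // IsOpen U ∧ t ∈ U} :=
    ⟨g ⁻¹' Metric.ball (g t) (ε / 2 / M), Metric.isOpen_ball.preimage hg,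
      Metric.mem_ball_self hδ⟩
  filter_upwards [@Ici_mem_atTop _ p U] with V hV
  have hV : V.1 ⊆ U.1 := hV
  have hnn : ∀ x, 0 ≤ ‖g x - g t‖ * f V x * w x := fun x =>
    mul_nonneg (mul_nonneg (norm_nonneg _) ((hf V).2.2.1 x).1) (by linarith [(hw x).1])
  have hle : ∀ x, ‖g x - g t‖ * f V x * w x ≤ ε / 2 := by
    intro x
    by_cases hx : x ∈ V.1
    · have h1 : ‖g x - g t‖ < ε / 2 / M := by
        have : dist (g x) (g t) < ε / 2 / M := hV hx
        rwa [dist_eq_norm] at this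
      have h2 : ‖g x - g t‖ * f V x ≤ ε / 2 / M :=
        (mul_le_of_le_one_right (norm_nonneg _) ((hf V).2.2.1 x).2).trans h1.le
      calc _ ≤ ε / 2 / M * M :=
            mul_le_mul h2 (hw x).2 (by linarith [(hw x).1]) hδ.le
        _ = ε / 2 := by field_simp
    · rw [hf0 V x hx]
      simp
      linarith
  have : Nonempty X := ⟨t⟩
  have hs := ciSup_le hle
  have hs0 := Real.iSup_nonneg hnn
  rw [Real.dist_eq, sub_zero, abs_of_nonneg hs0]
  linarith
end
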